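/- Let b > 0, let q : ℝ → ℂ be continuous on [−b,b], let f solve f'' − q f = 0 on [−b,b] with f(0) = 1, f'(0) = 0, and assume f(x) ≠ 0 for all x ∈ [−b,b]. Then there exists a continuous function K on {(x,t) : |t| ≤ |x| ≤ b} such that (i) for every twice continuously differentiable u : [−b,b] → ℂ, the function (Tu)(x) = u(x) + ∫_{−x}^{x} K(x,t)u(t)dt satisfies (Tu)'' − q·(Tu) = T(u'') on [−b,b], and (ii) for every integer k ≥ 0 and every x ∈ [−b,b], x^k + ∫_{−x}^{x} K(x,t) t^k dt = φ_k(x); that is, T maps x^k to the formal power φ_k. -/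

import Mathlib

open MeasureTheory Set Filter Finset Complex Topology

noncomputable section

/-- The iterated integrals X⁽ⁿ⁾: X⁽⁰⁾ ≡ 1, X⁽ⁿ⁾(x) = n ∫₀ˣ X⁽ⁿ⁻¹⁾(s) (f(s)²)^((−1)ⁿ) ds. -/
def formalX (f : ℝ → ℂ) : ℕ → ℝ → ℂ
  | 0 => fun _ => 1
  | n + 1 => fun x =>
      (n + 1 : ℂ) * ∫ s in (0:ℝ)..x, formalX f n s * ((f s) ^ 2) ^ ((-1 : ℤ) ^ (n + 1))

/-- The iterated integrals X̃⁽ⁿ⁾: X̃⁽⁰⁾ ≡ 1, X̃⁽ⁿ⁾(x) = n ∫₀ˣ X̃⁽ⁿ⁻¹⁾(s) (f(s)²)^((−1)^(n−1)) ds. -/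
def formalXt (f : ℝ → ℂ) : ℕ → ℝ → ℂ
  | 0 => fun _ => 1
  | n + 1 => fun x =>
      (n + 1 : ℂ) * ∫ s in (0:ℝ)..x, formalXt f n s * ((f s) ^ 2) ^ ((-1 : ℤ) ^ n)

/-- The formal powers φₖ: φₖ = f·X⁽ᵏ⁾ for odd k, φₖ = f·X̃⁽ᵏ⁾ for even k. -/
def formalPower (f : ℝ → ℂ) (k : ℕ) (x : ℝ) : ℂ :=
  if Odd k then f x * formalX f k x else f x * formalXt f k x

theorem leibniz_aux (F F' : ℝ → ℝ → ℂ) (hF : Continuous fun p : ℝ × ℝ => F p.1 p.2)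
    (hF' : Continuous fun p : ℝ × ℝ => F' p.1 p.2)
    (hd : ∀ x s, HasDerivAt (fun y => F y s) (F' x s) x) (x : ℝ) :
    HasDerivAt (fun y : ℝ => ∫ s in (0:ℝ)..y, F y s) (F x x + ∫ s in (0:ℝ)..x, F' x s) x := by
  have hFx : ∀ y, Continuous (F y) := fun y => by
    exact hF.comp (Continuous.prodMk continuous_const continuous_id)
  have hF'x : ∀ y, Continuous (F' y) := fun y => by
    exact hF'.comp (Continuous.prodMk continuous_const continuous_id)
  have h1 : HasDerivAt (fun y : ℝ => ∫ s in (0:ℝ)..x, F y s) (∫ s in (0:ℝ)..x, F' x s) x := by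
    obtain ⟨C, hC⟩ := ((isCompact_closedBall x 1).prod (isCompact_uIcc (a := (0:ℝ)) (b := x))).exists_bound_of_continuousOn hF'.continuousOn
    refine (intervalIntegral.hasDerivAt_integral_of_dominated_loc_of_deriv_le (F := F) (F' := F')
      (bound := fun _ => C) (Metric.closedBall_mem_nhds x one_pos) ?_ ?_ ?_ ?_ ?_ ?_).2
    · exact Eventually.of_forall fun y => (hFx y).aestronglyMeasurable
    · exact (hFx x).intervalIntegrable _ _
    · exact (hF'x x).aestronglyMeasurable
    · exact Eventually.of_forall fun t ht y hy => hC (y, t) ⟨hy, uIoc_subset_uIcc ht⟩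
    · exact intervalIntegrable_const
    · exact Eventually.of_forall fun t ht y hy => hd y t
  have h2 : HasDerivAt (fun y : ℝ => ∫ s in x..y, F x s) (F x x) x :=
    (hFx x).integral_hasStrictDerivAt x x |>.hasDerivAt
  have h3 : HasDerivAt (fun y : ℝ => ∫ s in x..y, (F y s - F x s)) 0 x := by
    rw [hasDerivAt_iff_isLittleO, Asymptotics.isLittleO_iff]
    intro c hc
    have hcont : ContinuousAt (fun p : ℝ × ℝ => F p.1 p.2 - F x p.2) (x, x) := by
      refine Continuous.continuousAt ?_
      exact hF.sub ((hFx x).comp continuous_snd)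
    obtain ⟨δ, hδ, hh⟩ := Metric.continuousAt_iff.1 hcont c hc
    filter_upwards [Metric.ball_mem_nhds x hδ] with y hy
    simp only [intervalIntegral.integral_same, sub_zero, smul_zero]
    refine intervalIntegral.norm_integral_le_of_norm_le_const fun s hs => ?_
    have hs' : dist s x < δ := by
      refine lt_of_le_of_lt ?_ hy
      rw [Real.dist_eq, Real.dist_eq]
      exact abs_sub_left_of_mem_uIcc (uIoc_subset_uIcc hs)
    have := hh (x := (y, s)) (by rw [Prod.dist_eq]; exact max_lt hy hs')
    simp [dist_eq_norm] at this
    exact this.le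
  have h := (h1.add h2).add h3
  refine (h.congr_deriv (by ring)).congr_of_eventuallyEq (Eventually.of_forall fun y => ?_)
  simp only [Pi.add_apply]
  rw [intervalIntegral.integral_sub ((hFx y).intervalIntegrable _ _) ((hFx x).intervalIntegrable _ _),
    ← intervalIntegral.integral_add_adjacent_intervals ((hFx y).intervalIntegrable 0 x) ((hFx y).intervalIntegrable x y)]
  ring

theorem cosh_bound (l C : ℝ) (hl : 0 < l) (hC : 0 ≤ C) (g : ℝ → ℂ)
    (hg : ∀ t, ‖g t‖ ≤ C * Real.cosh (l * t)) (x : ℝ) :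
    ‖∫ t in (0:ℝ)..x, g t‖ ≤ C / l * Real.cosh (l * x) := by
  have hc : Continuous fun t => C * Real.cosh (l * t) := by fun_prop
  refine (intervalIntegral.norm_integral_le_abs_of_norm_le (Eventually.of_forall hg)
    (hc.intervalIntegrable _ _)).trans ?_
  have : ∫ t in (0:ℝ)..x, C * Real.cosh (l * t) = C / l * Real.sinh (l * x) := by
    rw [intervalIntegral.integral_eq_sub_of_hasDerivAt (f := fun t => C / l * Real.sinh (l * t)) (f' := fun t => C * Real.cosh (l * t))]
    · simp
    · intro t _
      have := ((Real.hasDerivAt_sinh (l * t)).comp t ((hasDerivAt_id t).const_mul l)).const_mul (C / l)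
      refine this.congr_deriv ?_
      field_simp
    · exact hc.intervalIntegrable _ _
  rw [this, abs_mul, abs_of_nonneg (by positivity)]
  gcongr
  rw [abs_le]
  constructor
  · rw [neg_le, ← Real.sinh_neg, ← Real.cosh_neg]; exact (Real.sinh_lt_cosh _).le
  · exact (Real.sinh_lt_cosh _).le

theorem goursat_aux (q : ℝ → ℂ) (hq : Continuous q) (M : ℝ) (hM : ∀ x, ‖q x‖ ≤ M) :
    ∃ H B : ℝ → ℝ → ℂ, (Continuous fun p : ℝ × ℝ => H p.1 p.2) ∧
      (Continuous fun p : ℝ × ℝ => B p.1 p.2) ∧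
      (∀ x y, HasDerivAt (fun z => B z y) (q (x + y) * H x y) x) ∧
      (∀ x y, HasDerivAt (fun z => H x z) (B x y) y) ∧
      (∀ y, B 0 y = 0) ∧ (∀ x, H x 0 = (1/2) * ∫ s in (0:ℝ)..x, q s) := by
  have hM0 : 0 ≤ M := (norm_nonneg _).trans (hM 0)
  set l : ℝ := 2 * M + 1 with hl
  have hl0 : 0 < l := by positivity
  let w : ℝ × ℝ → ℝ := fun p => Real.cosh (l * p.1) * Real.cosh (l * p.2)
  have hw : Continuous w := by fun_prop
  have hw0 : ∀ p, 0 < w p := fun p => mul_pos (Real.cosh_pos _) (Real.cosh_pos _)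
  have hwC : Continuous fun p => (w p : ℂ) := by fun_prop
  have hwC0 : ∀ p, (w p : ℂ) ≠ 0 := fun p => by exact_mod_cast (hw0 p).ne'
  let B0 : (ℝ × ℝ → ℂ) → ℝ → ℝ → ℂ := fun G x y => ∫ a in (0:ℝ)..x, q (a + y) * G (a, y)
  have hB0 : ∀ G, Continuous G → Continuous fun p : ℝ × ℝ => B0 G p.1 p.2 := by
    intro G hG
    refine intervalIntegral.continuous_parametric_intervalIntegral_of_continuous (f := fun (p : ℝ × ℝ) a => q (a + p.2) * G (a, p.2)) ?_ continuous_fst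
    simp only [Function.uncurry_def]
    fun_prop
  let V : (ℝ × ℝ → ℂ) → ℝ × ℝ → ℂ := fun G p => ∫ y in (0:ℝ)..p.2, B0 G p.1 y
  have hV : ∀ G, Continuous G → Continuous (V G) := by
    intro G hG
    refine intervalIntegral.continuous_parametric_intervalIntegral_of_continuous (f := fun (p : ℝ × ℝ) a => B0 G p.1 a) ?_ continuous_snd
    simp only [Function.uncurry_def]
    exact (hB0 G hG).comp (by fun_prop : Continuous fun x : (ℝ × ℝ) × ℝ => (x.1.1, x.2))
  have hVb : ∀ G, ∀ C, 0 ≤ C → (∀ p, ‖G p‖ ≤ C * w p) → ∀ p, ‖V G p‖ ≤ (M * C / l / l) * w p := by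
    intro G C hC hG p
    have h1 : ∀ y, ‖B0 G p.1 y‖ ≤ (M * C / l * Real.cosh (l * p.1)) * Real.cosh (l * y) := by
      intro y
      have := cosh_bound l (M * C * Real.cosh (l * y)) hl0 (by positivity) (fun a => q (a + y) * G (a, y)) (fun t => by
        rw [norm_mul]
        calc _ ≤ M * (C * w (t, y)) := by
              gcongr
              · exact hM _
              · exact hG _
          _ = _ := by simp only [w]; ring) p.1
      refine this.trans (le_of_eq ?_)
      ring
    have := cosh_bound l _ hl0 (by positivity) (fun y => B0 G p.1 y) h1 p.2
    refine this.trans (le_of_eq ?_)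
    simp only [w]; ring
  let H0 : ℝ × ℝ → ℂ := fun p => (1/2) * ∫ s in (0:ℝ)..p.1, q s
  have hH0 : Continuous H0 := by
    refine continuous_const.mul ?_
    exact (intervalIntegral.continuous_primitive (fun a b => hq.intervalIntegrable a b) 0).comp continuous_fst
  have hH0b : ∀ p, ‖H0 p‖ ≤ (M / l) * w p := by
    intro p
    have := cosh_bound l M hl0 hM0 q (fun t => (hM t).trans (le_mul_of_one_le_right hM0 (Real.one_le_cosh _))) p.1
    simp only [H0, w, norm_mul]
    have h1 : ‖(1/2 : ℂ)‖ ≤ 1 := by norm_num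
    calc _ ≤ 1 * (M / l * Real.cosh (l * p.1)) := by gcongr
      _ ≤ M / l * Real.cosh (l * p.1) * Real.cosh (l * p.2) := by
        rw [one_mul]; exact le_mul_of_one_le_right (by positivity) (Real.one_le_cosh _)
      _ = _ := by ring
  have hwG : ∀ G : BoundedContinuousFunction (ℝ × ℝ) ℂ, Continuous fun p => (w p : ℂ) * G p :=
    fun G => hwC.mul G.continuous
  have hwGb : ∀ G : BoundedContinuousFunction (ℝ × ℝ) ℂ, ∀ p, ‖(w p : ℂ) * G p‖ ≤ ‖G‖ * w p := by
    intro G p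
    rw [norm_mul, Complex.norm_real, Real.norm_of_nonneg (hw0 p).le, mul_comm]
    exact mul_le_mul_of_nonneg_right (G.norm_coe_le_norm p) (hw0 p).le
  let Φ : BoundedContinuousFunction (ℝ × ℝ) ℂ → BoundedContinuousFunction (ℝ × ℝ) ℂ := fun G =>
    BoundedContinuousFunction.ofNormedAddCommGroup
      (fun p => (H0 p + V (fun p => (w p : ℂ) * G p) p) / (w p : ℂ))
      ((hH0.add (hV _ (hwG G))).div hwC hwC0) (M / l + M * ‖G‖ / l / l) (by
        intro p
        rw [norm_div, Complex.norm_real, Real.norm_of_nonneg (hw0 p).le, div_le_iff₀ (hw0 p), add_mul]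
        exact (norm_add_le _ _).trans (add_le_add (hH0b p) (hVb _ _ (norm_nonneg _) (hwGb G) p)))
  have hΦ : ContractingWith (1/2) Φ := by
    refine ⟨by norm_num, LipschitzWith.of_dist_le_mul fun G1 G2 => ?_⟩
    rw [BoundedContinuousFunction.dist_le (by positivity)]
    intro p
    have hsub : V (fun p => (w p : ℂ) * G1 p) p - V (fun p => (w p : ℂ) * G2 p) p
        = V (fun p => (w p : ℂ) * (G1 - G2) p) p := by
      have hcy : ∀ G : BoundedContinuousFunction (ℝ × ℝ) ℂ, Continuous fun y => B0 (fun p => (w p : ℂ) * G p) p.1 y := fun G =>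
        (hB0 _ (hwG G)).comp (by fun_prop : Continuous fun y : ℝ => (p.1, y))
      simp only [V]
      rw [← intervalIntegral.integral_sub ((hcy G1).intervalIntegrable _ _) ((hcy G2).intervalIntegrable _ _)]
      refine intervalIntegral.integral_congr fun y _ => ?_
      simp only [B0]
      have hca : ∀ G : BoundedContinuousFunction (ℝ × ℝ) ℂ, Continuous fun a => q (a + y) * ((w (a, y) : ℂ) * G (a, y)) := fun G => by
        have := (hwG G).comp (by fun_prop : Continuous fun a : ℝ => (a, y))
        exact (by fun_prop : Continuous fun a => q (a + y)).mul this
      rw [← intervalIntegral.integral_sub ((hca G1).intervalIntegrable _ _) ((hca G2).intervalIntegrable _ _)]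
      refine intervalIntegral.integral_congr fun a _ => ?_
      simp only [BoundedContinuousFunction.coe_sub, Pi.sub_apply]
      ring
    rw [dist_eq_norm, dist_eq_norm]
    simp only [Φ, BoundedContinuousFunction.coe_ofNormedAddCommGroup]
    rw [← sub_div, add_sub_add_left_eq_sub, hsub, norm_div, Complex.norm_real,
      Real.norm_of_nonneg (hw0 p).le, div_le_iff₀ (hw0 p)]
    refine (hVb _ _ (norm_nonneg _) (hwGb (G1 - G2)) p).trans ?_
    have h2 : M / l / l ≤ 1 / 2 := by
      rw [div_div, div_le_div_iff₀ (by positivity) (by norm_num)]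
      nlinarith
    have : M * ‖G1 - G2‖ / l / l = M / l / l * ‖G1 - G2‖ := by ring
    rw [this]
    have hw0' := (hw0 p).le
    push_cast
    gcongr
  obtain ⟨G, hG, -⟩ := hΦ.exists_fixedPoint 0 (edist_ne_top _ _)
  let Hh : ℝ × ℝ → ℂ := fun p => (w p : ℂ) * G p
  have hHh : Continuous Hh := hwG G
  have heq : ∀ p, Hh p = H0 p + V Hh p := by
    intro p
    have h := congrArg (fun g : BoundedContinuousFunction (ℝ × ℝ) ℂ => g p) hG
    simp only [Φ, BoundedContinuousFunction.coe_ofNormedAddCommGroup] at h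
    rw [div_eq_iff (hwC0 p)] at h
    simp only [Hh]
    rw [h, mul_comm]
  refine ⟨fun x y => Hh (x, y), B0 Hh, hHh, hB0 Hh hHh, ?_, ?_, ?_, ?_⟩
  · intro x y
    have hc : Continuous fun a => q (a + y) * Hh (a, y) := by fun_prop
    exact (hc.integral_hasStrictDerivAt 0 x).hasDerivAt
  · intro x y
    have hc : Continuous fun y => B0 Hh x y :=
      (hB0 _ hHh).comp (by fun_prop : Continuous fun y : ℝ => (x, y))
    have := ((hc.integral_hasStrictDerivAt 0 y).hasDerivAt).const_add (H0 (x, y))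
    refine this.congr_of_eventuallyEq (Eventually.of_forall fun z => ?_)
    exact heq (x, z)
  · intro y; simp [B0]
  · intro x; change Hh (x, 0) = _; rw [heq]; simp [H0, V]

def Iop (H : ℝ → ℝ → ℂ) (u : ℝ → ℂ) (x : ℝ) : ℂ :=
  ∫ s in (0:ℝ)..x, 2 * H s (x - s) * u (2 * s - x)

def Jop (B : ℝ → ℝ → ℂ) (u : ℝ → ℂ) (x : ℝ) : ℂ :=
  ∫ s in (0:ℝ)..x, B (x - s) s * u (x - 2 * s)

theorem Iop_eq (H : ℝ → ℝ → ℂ) (u : ℝ → ℂ) (x : ℝ) :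
    Iop H u x = ∫ t in (-x)..x, H ((x + t) / 2) ((x - t) / 2) * u t := by
  have := intervalIntegral.integral_comp_mul_sub (a := (0:ℝ)) (b := x) (c := (2:ℝ)) (fun t => H ((x + t) / 2) ((x - t) / 2) * u t) (by norm_num) x
  have h2 : (2 * 0 - x : ℝ) = -x := by ring
  have h3 : (2 * x - x : ℝ) = x := by ring
  rw [h2, h3] at this
  have h4 : ∫ t in (-x)..x, H ((x + t) / 2) ((x - t) / 2) * u t = (2:ℝ) • ∫ s in (0:ℝ)..x, H ((x + (2 * s - x)) / 2) ((x - (2 * s - x)) / 2) * u (2 * s - x) := by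
    rw [this, smul_smul]; norm_num
  rw [h4, Iop, ← intervalIntegral.integral_smul]
  refine intervalIntegral.integral_congr fun s _ => ?_
  simp only [Complex.real_smul]
  have e1 : (x + (2 * s - x)) / 2 = s := by ring
  have e2 : (x - (2 * s - x)) / 2 = x - s := by ring
  rw [e1, e2]; push_cast; ring

theorem Iop_continuous (H : ℝ → ℝ → ℂ) (hH : Continuous fun p : ℝ × ℝ => H p.1 p.2)
    (u : ℝ → ℂ) (hu : Continuous u) : Continuous (Iop H u) := by
  refine intervalIntegral.continuous_parametric_intervalIntegral_of_continuous (f := fun (x : ℝ) s => 2 * H s (x - s) * u (2 * s - x)) ?_ continuous_id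
  simp only [Function.uncurry_def]
  have h1 : Continuous fun p : ℝ × ℝ => H p.2 (p.1 - p.2) :=
    hH.comp (by fun_prop : Continuous fun p : ℝ × ℝ => (p.2, p.1 - p.2))
  fun_prop

theorem Iop_hasDerivAt (H B : ℝ → ℝ → ℂ) (hH : Continuous fun p : ℝ × ℝ => H p.1 p.2)
    (hB : Continuous fun p : ℝ × ℝ => B p.1 p.2)
    (hHB : ∀ x y, HasDerivAt (fun z => H x z) (B x y) y)
    (u u' : ℝ → ℂ) (hu : ∀ x, HasDerivAt u (u' x) x) (hu' : Continuous u') (x : ℝ) :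
    HasDerivAt (Iop H u) (2 * H x 0 * u x + 2 * Jop B u x - Iop H u' x) x := by
  have huc : Continuous u := continuous_iff_continuousAt.2 fun x => (hu x).continuousAt
  have h1 : Continuous fun p : ℝ × ℝ => H p.2 (p.1 - p.2) :=
    hH.comp (by fun_prop : Continuous fun p : ℝ × ℝ => (p.2, p.1 - p.2))
  have h2 : Continuous fun p : ℝ × ℝ => B p.2 (p.1 - p.2) :=
    hB.comp (by fun_prop : Continuous fun p : ℝ × ℝ => (p.2, p.1 - p.2))
  have h1x : Continuous fun s : ℝ => H s (x - s) := h1.comp (by fun_prop : Continuous fun s : ℝ => (x, s))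
  have h2x : Continuous fun s : ℝ => B s (x - s) := h2.comp (by fun_prop : Continuous fun s : ℝ => (x, s))
  have := leibniz_aux (fun x s => 2 * H s (x - s) * u (2 * s - x))
    (fun x s => 2 * B s (x - s) * u (2 * s - x) - 2 * H s (x - s) * u' (2 * s - x))
    (by fun_prop) (by fun_prop) (by
      intro x s
      have a1 : HasDerivAt (fun y : ℝ => y - s) 1 x := (hasDerivAt_id x).sub_const s
      have a2 : HasDerivAt (fun y : ℝ => 2 * s - y) (-1) x := (hasDerivAt_id x).const_sub (2 * s)
      have b1 := (hHB s (x - s)).scomp x a1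
      have b2 := (hu (2 * s - x)).scomp x a2
      have := (b1.const_mul 2).mul b2
      refine this.congr_deriv ?_
      simp
      ring) x
  refine this.congr_deriv ?_
  have e0 : (2 * x - x : ℝ) = x := by ring
  have e1 : ∫ s in (0:ℝ)..x, 2 * B s (x - s) * u (2 * s - x) = 2 * Jop B u x := by
    have := intervalIntegral.integral_comp_sub_left (a := (0:ℝ)) (b := x) (fun s => B s (x - s) * u (2 * s - x)) x
    simp only [sub_self, sub_zero] at this
    rw [Jop, ← intervalIntegral.integral_const_mul]
    rw [intervalIntegral.integral_const_mul]
    simp only [mul_assoc]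
    rw [intervalIntegral.integral_const_mul, ← this]
    congr 1
    refine intervalIntegral.integral_congr fun s _ => ?_
    have e1 : x - (x - s) = s := by ring
    have e2 : 2 * (x - s) - x = x - 2 * s := by ring
    rw [e1, e2]
  rw [intervalIntegral.integral_sub (Continuous.intervalIntegrable (by fun_prop) _ _)
    (Continuous.intervalIntegrable (by fun_prop) _ _), e1, e0, sub_self]
  simp only [Iop]
  ring

theorem Jop_hasDerivAt (q : ℝ → ℂ) (H B : ℝ → ℝ → ℂ) (hq : Continuous q)
    (hH : Continuous fun p : ℝ × ℝ => H p.1 p.2)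
    (hB : Continuous fun p : ℝ × ℝ => B p.1 p.2)
    (hBH : ∀ x y, HasDerivAt (fun z => B z y) (q (x + y) * H x y) x)
    (hB0 : ∀ y, B 0 y = 0)
    (u u' : ℝ → ℂ) (hu : ∀ x, HasDerivAt u (u' x) x) (hu' : Continuous u') (x : ℝ) :
    HasDerivAt (Jop B u) (q x * (1/2) * Iop H u x + Jop B u' x) x := by
  have huc : Continuous u := continuous_iff_continuousAt.2 fun x => (hu x).continuousAt
  have h1 : Continuous fun p : ℝ × ℝ => H (p.1 - p.2) p.2 :=
    hH.comp (by fun_prop : Continuous fun p : ℝ × ℝ => (p.1 - p.2, p.2))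
  have h2 : Continuous fun p : ℝ × ℝ => B (p.1 - p.2) p.2 :=
    hB.comp (by fun_prop : Continuous fun p : ℝ × ℝ => (p.1 - p.2, p.2))
  have h1x : Continuous fun s : ℝ => H (x - s) s := h1.comp (by fun_prop : Continuous fun s : ℝ => (x, s))
  have h2x : Continuous fun s : ℝ => B (x - s) s := h2.comp (by fun_prop : Continuous fun s : ℝ => (x, s))
  have := leibniz_aux (fun x s => B (x - s) s * u (x - 2 * s))
    (fun x s => q x * (H (x - s) s * u (x - 2 * s)) + B (x - s) s * u' (x - 2 * s))
    (by fun_prop) (by fun_prop) (by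
      intro x s
      have a1 : HasDerivAt (fun y : ℝ => y - s) 1 x := (hasDerivAt_id x).sub_const s
      have a2 : HasDerivAt (fun y : ℝ => y - 2 * s) 1 x := (hasDerivAt_id x).sub_const (2 * s)
      have b1 := (hBH (x - s) s).scomp x a1
      have b2 := (hu (x - 2 * s)).scomp x a2
      have := b1.mul b2
      refine this.congr_deriv ?_
      simp
      ring) x
  refine this.congr_deriv ?_
  have e1 : ∫ s in (0:ℝ)..x, H (x - s) s * u (x - 2 * s) = (1/2) * Iop H u x := by
    have := intervalIntegral.integral_comp_sub_left (a := (0:ℝ)) (b := x) (fun s => H s (x - s) * u (2 * s - x)) x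
    simp only [sub_self, sub_zero] at this
    simp only [Iop, mul_assoc]
    rw [intervalIntegral.integral_const_mul, ← this, ← mul_assoc]
    norm_num
    refine intervalIntegral.integral_congr fun s _ => ?_
    have e2 : 2 * (x - s) - x = x - 2 * s := by ring
    rw [e2]
  rw [intervalIntegral.integral_add (Continuous.intervalIntegrable (by fun_prop) _ _)
    (Continuous.intervalIntegrable (by fun_prop) _ _), intervalIntegral.integral_const_mul, e1, sub_self, hB0]
  simp only [Jop]
  ring

/-- Global statement: existence of the kernel for a bounded continuous potential. -/
theorem global_kernel (q : ℝ → ℂ) (hq : Continuous q) (M : ℝ) (hM : ∀ x, ‖q x‖ ≤ M) :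
    ∃ H : ℝ → ℝ → ℂ, (Continuous fun p : ℝ × ℝ => H p.1 p.2) ∧
      ∀ u u' u'' : ℝ → ℂ, (∀ x, HasDerivAt u (u' x) x) → (∀ x, HasDerivAt u' (u'' x) x) →
        Continuous u'' →
        ∃ E : ℝ → ℂ, E 0 = 0 ∧ (∀ x, HasDerivAt (Iop H u) (E x) x) ∧
          ∀ x, HasDerivAt E (q x * u x + q x * Iop H u x + Iop H u'' x) x := by
  obtain ⟨H, B, hH, hB, hBH, hHB, hB0, hH0⟩ := goursat_aux q hq M hM
  refine ⟨H, hH, fun u u' u'' hu hu' hu'' => ?_⟩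
  have hu'c : Continuous u' := continuous_iff_continuousAt.2 fun x => (hu' x).continuousAt
  refine ⟨fun x => 2 * H x 0 * u x + 2 * Jop B u x - Iop H u' x, ?_,
    Iop_hasDerivAt H B hH hB hHB u u' hu hu'c, fun x => ?_⟩
  · simp [hH0, Jop, Iop]
  · have hd : HasDerivAt (fun x => H x 0) ((1/2) * q x) x := by
      have := ((hq.integral_hasStrictDerivAt 0 x).hasDerivAt).const_mul (1/2 : ℂ)
      exact this.congr_of_eventuallyEq (Eventually.of_forall hH0)
    have := (((hd.const_mul 2).mul (hu x)).add
      ((Jop_hasDerivAt q H B hq hH hB hBH hB0 u u' hu hu'c x).const_mul 2)).sub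
      (Iop_hasDerivAt H B hH hB hHB u' u'' hu' hu'' x)
    refine this.congr_deriv ?_
    ring

theorem const_on_aux (b : ℝ) (hb : 0 < b) (g : ℝ → ℂ)
    (hg : ∀ x ∈ Set.Icc (-b) b, HasDerivWithinAt g 0 (Set.Icc (-b) b) x) :
    ∀ x ∈ Set.Icc (-b) b, g x = g 0 := by
  intro x hx
  have h := Convex.norm_image_sub_le_of_norm_hasDerivWithin_le (C := 0) hg (by simp) (convex_Icc (-b) b)
    (show (0:ℝ) ∈ Set.Icc (-b) b by constructor <;> linarith) hx
  rw [zero_mul] at h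
  exact sub_eq_zero.1 (norm_le_zero_iff.1 h)

theorem eq_on_aux (b : ℝ) (hb : 0 < b) (g h d : ℝ → ℂ)
    (hg : ∀ x ∈ Set.Icc (-b) b, HasDerivWithinAt g (d x) (Set.Icc (-b) b) x)
    (hh : ∀ x ∈ Set.Icc (-b) b, HasDerivWithinAt h (d x) (Set.Icc (-b) b) x)
    (h0 : g 0 = h 0) :
    ∀ x ∈ Set.Icc (-b) b, g x = h x := by
  intro x hx
  have := const_on_aux b hb (fun x => g x - h x)
    (fun x hx => ((hg x hx).sub (hh x hx)).congr_deriv (sub_self _)) x hx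
  simp only [h0, sub_self] at this
  exact sub_eq_zero.1 this

theorem ode_repr (b : ℝ) (hb : 0 < b) (q f f' v v' g P R : ℝ → ℂ)
    (hf : ∀ x ∈ Set.Icc (-b) b, HasDerivAt f (f' x) x)
    (hf' : ∀ x ∈ Set.Icc (-b) b, HasDerivAt f' (q x * f x) x)
    (hf0 : f 0 = 1) (hf'0 : f' 0 = 0)
    (hfne : ∀ x ∈ Set.Icc (-b) b, f x ≠ 0)
    (hv : ∀ x ∈ Set.Icc (-b) b, HasDerivAt v (v' x) x)
    (hv' : ∀ x ∈ Set.Icc (-b) b, HasDerivAt v' (q x * v x + g x) x)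
    (hR : ∀ x ∈ Set.Icc (-b) b, HasDerivWithinAt R (g x * f x) (Set.Icc (-b) b) x)
    (hP : ∀ x ∈ Set.Icc (-b) b, HasDerivWithinAt P (R x / f x ^ 2) (Set.Icc (-b) b) x)
    (hR0 : v' 0 = R 0) (hP0 : v 0 = P 0) :
    ∀ x ∈ Set.Icc (-b) b, v x = f x * P x := by
  have hW := eq_on_aux b hb (fun x => v' x * f x - v x * f' x) R (fun x => g x * f x)
    (fun x hx => (((((hv' x hx).mul (hf x hx)).sub ((hv x hx).mul (hf' x hx))).congr_deriv
      (by ring)).hasDerivWithinAt)) hR (by simp [hf0, hf'0, hR0])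
  have h2 := eq_on_aux b hb (fun x => v x / f x) P (fun x => R x / f x ^ 2)
    (fun x hx => ((((hv x hx).div (hf x hx) (hfne x hx)).congr_deriv
      (by rw [← hW x hx])).hasDerivWithinAt)) hP (by simp [hf0, hP0])
  intro x hx
  rw [← h2 x hx]
  have := hfne x hx
  field_simp

theorem extend_aux (b : ℝ) (hb : 0 < b) (g : ℝ → ℂ) (hg : ContinuousOn g (Set.Icc (-b) b)) :
    ∃ ge : ℝ → ℂ, Continuous ge ∧ (∀ x ∈ Set.Icc (-b) b, ge x = g x) ∧
      ∀ x, ∃ y ∈ Set.Icc (-b) b, ge x = g y := by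
  have h : -b ≤ b := by linarith
  refine ⟨fun x => g (Set.projIcc (-b) b h x), ?_, ?_, ?_⟩
  · exact hg.comp_continuous (continuous_subtype_val.comp continuous_projIcc) (fun x => (Set.projIcc (-b) b h x).2)
  · intro x hx
    simp only [Set.projIcc_of_mem h hx]
  · intro x
    exact ⟨_, (Set.projIcc (-b) b h x).2, rfl⟩

theorem formalX_deriv (f : ℝ → ℂ) (hf : Continuous f) (hne : ∀ x, f x ≠ 0) (n : ℕ) :
    Continuous (formalX f n) ∧ ∀ x, HasDerivAt (formalX f (n+1))
      ((n + 1 : ℂ) * (formalX f n x * ((f x) ^ 2) ^ ((-1 : ℤ) ^ (n + 1)))) x := by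
  have key : ∀ n, Continuous (formalX f n) → ∀ x, HasDerivAt (formalX f (n+1))
      ((n + 1 : ℂ) * (formalX f n x * ((f x) ^ 2) ^ ((-1 : ℤ) ^ (n + 1)))) x := by
    intro n hn x
    have hc : Continuous fun s => formalX f n s * ((f s) ^ 2) ^ ((-1 : ℤ) ^ (n + 1)) :=
      hn.mul ((hf.pow 2).zpow₀ _ fun x => Or.inl (pow_ne_zero 2 (hne x)))
    exact ((hc.integral_hasStrictDerivAt 0 x).hasDerivAt).const_mul (n + 1 : ℂ)
  have hc : Continuous (formalX f n) := by
    induction n with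
    | zero => exact continuous_const
    | succ n ih => exact continuous_iff_continuousAt.2 fun x => (key n ih x).continuousAt
  exact ⟨hc, key n hc⟩

theorem formalXt_deriv (f : ℝ → ℂ) (hf : Continuous f) (hne : ∀ x, f x ≠ 0) (n : ℕ) :
    Continuous (formalXt f n) ∧ ∀ x, HasDerivAt (formalXt f (n+1))
      ((n + 1 : ℂ) * (formalXt f n x * ((f x) ^ 2) ^ ((-1 : ℤ) ^ n))) x := by
  have key : ∀ n, Continuous (formalXt f n) → ∀ x, HasDerivAt (formalXt f (n+1))
      ((n + 1 : ℂ) * (formalXt f n x * ((f x) ^ 2) ^ ((-1 : ℤ) ^ n))) x := by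
    intro n hn x
    have hc : Continuous fun s => formalXt f n s * ((f s) ^ 2) ^ ((-1 : ℤ) ^ n) :=
      hn.mul ((hf.pow 2).zpow₀ _ fun x => Or.inl (pow_ne_zero 2 (hne x)))
    exact ((hc.integral_hasStrictDerivAt 0 x).hasDerivAt).const_mul (n + 1 : ℂ)
  have hc : Continuous (formalXt f n) := by
    induction n with
    | zero => exact continuous_const
    | succ n ih => exact continuous_iff_continuousAt.2 fun x => (key n ih x).continuousAt
  exact ⟨hc, key n hc⟩

theorem uIcc_zero_sub (b x : ℝ) (hb : 0 < b) (hx : x ∈ Set.Icc (-b) b) :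
    Set.uIcc 0 x ⊆ Set.Icc (-b) b :=
  Set.uIcc_subset_Icc (by constructor <;> linarith) hx

theorem formalX_congr (b : ℝ) (hb : 0 < b) (f g : ℝ → ℂ) (h : ∀ x ∈ Set.Icc (-b) b, g x = f x) (n : ℕ) :
    ∀ x ∈ Set.Icc (-b) b, formalX g n x = formalX f n x ∧ formalXt g n x = formalXt f n x := by
  induction n with
  | zero => intro x _; exact ⟨rfl, rfl⟩
  | succ n ih =>
    intro x hx
    simp only [formalX, formalXt]
    constructor
    · congr 1
      refine intervalIntegral.integral_congr fun s hs => ?_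
      have hs' := uIcc_zero_sub b x hb hx hs
      simp only [(ih s hs').1, h s hs']
    · congr 1
      refine intervalIntegral.integral_congr fun s hs => ?_
      have hs' := uIcc_zero_sub b x hb hx hs
      simp only [(ih s hs').2, h s hs']

def Pk (f : ℝ → ℂ) (k : ℕ) (x : ℝ) : ℂ := if Odd k then formalX f k x else formalXt f k x
def Rk (f : ℝ → ℂ) (k : ℕ) (x : ℝ) : ℂ := if Odd k then formalXt f k x else formalX f k x

theorem Pk_deriv (f : ℝ → ℂ) (hf : Continuous f) (hne : ∀ x, f x ≠ 0) (n : ℕ) (x : ℝ) :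
    HasDerivAt (Pk f (n+1)) ((n + 1 : ℂ) * Rk f n x / f x ^ 2) x := by
  by_cases h : Odd n
  · have h' : ¬ Odd (n+1) := by simpa [Nat.odd_add_one] using h
    have e : Pk f (n+1) = formalXt f (n+1) := by funext y; simp only [Pk, h', if_false]
    rw [e]
    refine ((formalXt_deriv f hf hne n).2 x).congr_deriv ?_
    simp only [Rk, h, if_true, h.neg_one_pow, zpow_neg, zpow_one]
    ring
  · have h' : Odd (n+1) := by simpa [Nat.odd_add_one] using h
    have e : Pk f (n+1) = formalX f (n+1) := by funext y; simp only [Pk, h', if_true]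
    rw [e]
    refine ((formalX_deriv f hf hne n).2 x).congr_deriv ?_
    simp only [Rk, h, if_false, h'.neg_one_pow, zpow_neg, zpow_one]
    ring

theorem Rk_deriv (f : ℝ → ℂ) (hf : Continuous f) (hne : ∀ x, f x ≠ 0) (n : ℕ) (x : ℝ) :
    HasDerivAt (Rk f (n+1)) ((n + 1 : ℂ) * Pk f n x * f x ^ 2) x := by
  by_cases h : Odd n
  · have h' : ¬ Odd (n+1) := by simpa [Nat.odd_add_one] using h
    have e : Rk f (n+1) = formalX f (n+1) := by funext y; simp only [Rk, h', if_false]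
    rw [e]
    refine ((formalX_deriv f hf hne n).2 x).congr_deriv ?_
    simp only [Pk, h, if_true, (Nat.not_odd_iff_even.1 h').neg_one_pow, zpow_one]
    ring
  · have h' : Odd (n+1) := by simpa [Nat.odd_add_one] using h
    have e : Rk f (n+1) = formalXt f (n+1) := by funext y; simp only [Rk, h', if_true]
    rw [e]
    refine ((formalXt_deriv f hf hne n).2 x).congr_deriv ?_
    simp only [Pk, h, if_false, (Nat.not_odd_iff_even.1 h).neg_one_pow, zpow_one]
    ring

theorem Pk_succ_zero (f : ℝ → ℂ) (n : ℕ) : Pk f (n+1) 0 = 0 := by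
  simp [Pk, formalX, formalXt]

theorem Rk_succ_zero (f : ℝ → ℂ) (n : ℕ) : Rk f (n+1) 0 = 0 := by
  simp [Rk, formalX, formalXt]

theorem Pk_zero (f : ℝ → ℂ) : Pk f 0 = fun _ => 1 := by
  funext x; simp [Pk, formalX, formalXt]

theorem Rk_zero (f : ℝ → ℂ) : Rk f 0 = fun _ => 1 := by
  funext x; simp [Rk, formalX, formalXt]

theorem formalPower_eq (b : ℝ) (hb : 0 < b) (f g : ℝ → ℂ) (h : ∀ x ∈ Set.Icc (-b) b, g x = f x) (n : ℕ) :
    ∀ x ∈ Set.Icc (-b) b, formalPower f n x = f x * Pk g n x := by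
  intro x hx
  have := formalX_congr b hb f g h n x hx
  unfold formalPower Pk
  split_ifs
  · rw [this.1]
  · rw [this.2]

theorem pow_hasDerivAt_aux (n : ℕ) (x : ℝ) :
    HasDerivAt (fun t : ℝ => (t : ℂ) ^ (n + 1)) ((n + 1 : ℂ) * (x : ℂ) ^ n) x := by
  have := (hasDerivAt_pow (n + 1) (x : ℂ)).comp_ofReal
  simpa using this

theorem powers_aux (b : ℝ) (hb : 0 < b) (q f f' : ℝ → ℂ)
    (hf : ∀ x ∈ Set.Icc (-b) b, HasDerivAt f (f' x) x)
    (hf' : ∀ x ∈ Set.Icc (-b) b, HasDerivAt f' (q x * f x) x)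
    (hf0 : f 0 = 1) (hf'0 : f' 0 = 0)
    (hfne : ∀ x ∈ Set.Icc (-b) b, f x ≠ 0)
    (H : ℝ → ℝ → ℂ)
    (hT : ∀ u u' u'' : ℝ → ℂ, (∀ x, HasDerivAt u (u' x) x) → (∀ x, HasDerivAt u' (u'' x) x) →
        Continuous u'' →
        ∃ E : ℝ → ℂ, E 0 = 0 ∧ (∀ x, HasDerivAt (Iop H u) (E x) x) ∧
          ∀ x ∈ Set.Icc (-b) b, HasDerivAt E (q x * u x + q x * Iop H u x + Iop H u'' x) x)
    (k : ℕ) : ∀ x ∈ Set.Icc (-b) b,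
      (x : ℂ) ^ k + Iop H (fun t => (t : ℂ) ^ k) x = formalPower f k x := by
  obtain ⟨fe, hfec, hfe, hfe2⟩ := extend_aux b hb f (fun x hx => (hf x hx).continuousAt.continuousWithinAt)
  have hfene : ∀ x, fe x ≠ 0 := fun x => by
    obtain ⟨y, hy, e⟩ := hfe2 x
    rw [e]; exact hfne y hy
  suffices h : ∀ k, (∀ x ∈ Set.Icc (-b) b,
      (x : ℂ) ^ k + Iop H (fun t => (t : ℂ) ^ k) x = f x * Pk fe k x) by
    intro x hx
    rw [h k x hx, formalPower_eq b hb f fe hfe k x hx]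
  have hI0 : ∀ u, Iop H u 0 = 0 := fun u => by simp [Iop]
  have hPd : ∀ n, ∀ x ∈ Set.Icc (-b) b, HasDerivWithinAt (Pk fe (n+1)) ((n + 1 : ℂ) * Rk fe n x / f x ^ 2) (Set.Icc (-b) b) x := by
    intro n x hx
    rw [← hfe x hx]
    exact (Pk_deriv fe hfec hfene n x).hasDerivWithinAt
  have hRd : ∀ n, ∀ x ∈ Set.Icc (-b) b, HasDerivWithinAt (Rk fe (n+1)) ((n + 1 : ℂ) * Pk fe n x * f x ^ 2) (Set.Icc (-b) b) x := by
    intro n x hx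
    rw [← hfe x hx]
    exact (Rk_deriv fe hfec hfene n x).hasDerivWithinAt
  have hIz : ∀ x, Iop H (fun _ => 0) x = 0 := fun x => by simp [Iop]
  intro k
  induction k using Nat.strong_induction_on with
  | _ k ih =>
  match k, ih with
  | 0, _ =>
    obtain ⟨E, hE0, hE1, hE2⟩ := hT (fun t => (t : ℂ) ^ 0) (fun _ => 0) (fun _ => 0)
      (fun x => by simpa using hasDerivAt_const x (1:ℂ)) (fun x => hasDerivAt_const x 0) continuous_const
    refine ode_repr b hb q f f' _ E (fun _ => 0) (Pk fe 0) (fun _ => 0) hf hf' hf0 hf'0 hfne ?_ ?_ ?_ ?_ ?_ ?_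
    · intro x _
      have := (hasDerivAt_const x (1:ℂ)).add (hE1 x)
      rw [zero_add] at this
      exact this.congr_of_eventuallyEq (Eventually.of_forall fun y => by simp)
    · intro x hx
      refine (hE2 x hx).congr_deriv ?_
      rw [hIz]; ring
    · intro x _
      rw [zero_mul]; exact hasDerivWithinAt_const _ _ _
    · intro x _
      rw [zero_div, Pk_zero]; exact hasDerivWithinAt_const _ _ _
    · exact hE0
    · simp [hI0, Pk_zero]
  | 1, _ =>
    have hu : ∀ x : ℝ, HasDerivAt (fun t : ℝ => (t : ℂ) ^ 1) 1 x := fun x => by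
      simpa using pow_hasDerivAt_aux 0 x
    obtain ⟨E, hE0, hE1, hE2⟩ := hT (fun t => (t : ℂ) ^ 1) (fun _ => 1) (fun _ => 0)
      hu (fun x => hasDerivAt_const x 1) continuous_const
    refine ode_repr b hb q f f' _ (fun x => 1 + E x) (fun _ => 0) (Pk fe 1) (Rk fe 0) hf hf' hf0 hf'0 hfne ?_ ?_ ?_ ?_ ?_ ?_
    · intro x _
      exact (hu x).add (hE1 x)
    · intro x hx
      refine ((hE2 x hx).const_add 1).congr_deriv ?_
      rw [hIz]; ring
    · intro x _
      rw [zero_mul, Rk_zero]; exact hasDerivWithinAt_const _ _ _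
    · intro x hx
      exact (hPd 0 x hx).congr_deriv (by simp)
    · simp [hE0, Rk_zero]
    · simp [hI0, Pk_succ_zero]
  | n + 2, ih =>
    have ihn := ih n (by omega)
    have hu : ∀ x : ℝ, HasDerivAt (fun t : ℝ => (t : ℂ) ^ (n + 2)) ((n + 2 : ℂ) * (x : ℂ) ^ (n + 1)) x := fun x => by
      refine (pow_hasDerivAt_aux (n+1) x).congr_deriv ?_
      push_cast; ring
    have hu' : ∀ x : ℝ, HasDerivAt (fun t : ℝ => (n + 2 : ℂ) * (t : ℂ) ^ (n + 1)) ((n + 2 : ℂ) * (n + 1) * (x : ℂ) ^ n) x := fun x => by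
      refine ((pow_hasDerivAt_aux n x).const_mul (n + 2 : ℂ)).congr_deriv ?_
      ring
    obtain ⟨E, hE0, hE1, hE2⟩ := hT _ _ _ hu hu' (by fun_prop)
    have hIm : ∀ x, Iop H (fun t : ℝ => (n + 2 : ℂ) * (n + 1) * (t : ℂ) ^ n) x
        = (n + 2 : ℂ) * (n + 1) * Iop H (fun t : ℝ => (t : ℂ) ^ n) x := by
      intro x
      simp only [Iop]
      rw [← intervalIntegral.integral_const_mul]
      refine intervalIntegral.integral_congr fun s _ => ?_
      ring
    refine ode_repr b hb q f f' _ (fun x => (n + 2 : ℂ) * (x : ℂ) ^ (n + 1) + E x)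
      (fun x => (n + 2 : ℂ) * (n + 1) * ((x : ℂ) ^ n + Iop H (fun t : ℝ => (t : ℂ) ^ n) x))
      (Pk fe (n+2)) (fun x => (n + 2 : ℂ) * Rk fe (n+1) x) hf hf' hf0 hf'0 hfne ?_ ?_ ?_ ?_ ?_ ?_
    · intro x _
      exact (hu x).add (hE1 x)
    · intro x hx
      refine ((hu' x).add (hE2 x hx)).congr_deriv ?_
      rw [hIm]; ring
    · intro x hx
      refine ((hRd n x hx).const_mul (n + 2 : ℂ)).congr_deriv ?_
      rw [ihn x hx]; ring
    · intro x hx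
      refine (hPd (n+1) x hx).congr_deriv ?_
      push_cast; ring
    · simp [hE0, Rk_succ_zero]
    · simp [hI0, Pk_succ_zero]

theorem glue_deriv (E I1 I2 : ℝ → ℂ) (d : ℂ) (x : ℝ) (h1 : HasDerivAt I1 d x) (h2 : HasDerivAt I2 d x)
    (h12 : I1 x = I2 x) (hE : ∀ᶠ s in 𝓝 x, E s = I1 s ∨ E s = I2 s) : HasDerivAt E d x := by
  have hEx : E x = I1 x := by
    rcases hE.self_of_nhds with h | h
    · exact h
    · rw [h, h12]
  rw [hasDerivAt_iff_isLittleO, Asymptotics.isLittleO_iff] at *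
  intro c hc
  filter_upwards [h1 hc, h2 hc, hE] with s a1 a2 a3
  rcases a3 with h | h
  · rw [h, hEx]; exact a1
  · rw [h, hEx, h12]; exact a2

theorem ind_integral (S c1 c2 : ℝ) (h1 : 0 ≤ c1) (h2 : 0 ≤ c2) (hS1 : c1 ≤ S) (hS2 : c2 ≤ S)
    (g1 g2 : ℝ → ℂ) (hg1 : Continuous g1) (hg2 : Continuous g2) :
    ∫ t in (-S)..S, (2 * (Set.Ioc (-c1) c1).indicator g1 t - (Set.Ioc (-c2) c2).indicator g2 t)
      = 2 * (∫ t in (-c1)..c1, g1 t) - ∫ t in (-c2)..c2, g2 t := by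
  have key : ∀ (c : ℝ) (g : ℝ → ℂ), 0 ≤ c → c ≤ S → Continuous g →
      ∫ t in (-S)..S, (Set.Ioc (-c) c).indicator g t = ∫ t in (-c)..c, g t := by
    intro c g hc hcS hg
    rw [intervalIntegral.integral_of_le (by linarith), intervalIntegral.integral_of_le (by linarith),
      setIntegral_indicator measurableSet_Ioc]
    congr 2
    exact Set.inter_eq_right.2 (Set.Ioc_subset_Ioc (by linarith) hcS)
  have ii : ∀ (c : ℝ) (g : ℝ → ℂ), Continuous g →
      IntervalIntegrable ((Set.Ioc (-c) c).indicator g) volume (-S) S := by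
    intro c g hg
    have := (hg.intervalIntegrable (μ := volume) (-S) S)
    rw [intervalIntegrable_iff] at this ⊢
    exact this.indicator measurableSet_Ioc
  rw [intervalIntegral.integral_sub ((ii c1 g1 hg1).const_mul 2) (ii c2 g2 hg2),
    intervalIntegral.integral_const_mul, key c1 g1 h1 hS1 hg1, key c2 g2 h2 hS2 hg2]

/-- extension of a C² function -/
theorem extend_C2 (b : ℝ) (hb : 0 < b) (u u' u'' : ℝ → ℂ)
    (hu : ∀ x ∈ Set.Icc (-b) b, HasDerivAt u (u' x) x)
    (hu' : ∀ x ∈ Set.Icc (-b) b, HasDerivAt u' (u'' x) x)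
    (hu'' : ContinuousOn u'' (Set.Icc (-b) b)) :
    ∃ w w' w'' : ℝ → ℂ, (∀ x, HasDerivAt w (w' x) x) ∧ (∀ x, HasDerivAt w' (w'' x) x) ∧
      Continuous w'' ∧ (∀ x ∈ Set.Icc (-b) b, w x = u x ∧ w' x = u' x ∧ w'' x = u'' x) := by
  obtain ⟨w'', hc, he, -⟩ := extend_aux b hb u'' hu''
  let w' : ℝ → ℂ := fun x => u' 0 + ∫ s in (0:ℝ)..x, w'' s
  have hw' : ∀ x, HasDerivAt w' (w'' x) x := fun x =>
    (hc.integral_hasStrictDerivAt 0 x).hasDerivAt.const_add _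
  have hw'c : Continuous w' := continuous_iff_continuousAt.2 fun x => (hw' x).continuousAt
  let w : ℝ → ℂ := fun x => u 0 + ∫ s in (0:ℝ)..x, w' s
  have hw : ∀ x, HasDerivAt w (w' x) x := fun x =>
    (hw'c.integral_hasStrictDerivAt 0 x).hasDerivAt.const_add _
  have e1 := eq_on_aux b hb w' u' w'' (fun x _ => (hw' x).hasDerivWithinAt)
    (fun x hx => by rw [he x hx]; exact (hu' x hx).hasDerivWithinAt) (by simp [w'])
  have e0 := eq_on_aux b hb w u w' (fun x _ => (hw x).hasDerivWithinAt)
    (fun x hx => by rw [e1 x hx]; exact (hu x hx).hasDerivWithinAt) (by simp [w])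
  exact ⟨w, w', w'', hw, hw', hc, fun x hx => ⟨e0 x hx, e1 x hx, he x hx⟩⟩

def Kext (b : ℝ) (H : ℝ → ℝ → ℂ) (s t : ℝ) : ℂ :=
  if |s| ≤ b then H ((s + t) / 2) ((s - t) / 2)
  else if b < s then
    2 * (Set.Ioc (-b) b).indicator (fun t => H ((b + t) / 2) ((b - t) / 2)) t
      - (Set.Ioc (-(2 * b - s)) (2 * b - s)).indicator
          (fun t => H (((2 * b - s) + t) / 2) (((2 * b - s) - t) / 2)) t
  else
    2 * (Set.Ioc (-b) b).indicator (fun t => H ((-b + t) / 2) ((-b - t) / 2)) t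
      - (Set.Ioc (-(2 * b + s)) (2 * b + s)).indicator
          (fun t => H ((-(2 * b + s) + t) / 2) ((-(2 * b + s) - t) / 2)) t

theorem Kext_inside (b : ℝ) (H : ℝ → ℝ → ℂ) (u w : ℝ → ℂ)
    (h : ∀ x ∈ Set.Icc (-b) b, w x = u x) (s : ℝ) (hs : |s| ≤ b) :
    ∫ t in (-s)..s, Kext b H s t * u t = Iop H w s := by
  rw [Iop_eq]
  refine intervalIntegral.integral_congr fun t ht => ?_
  have hs' := abs_le.1 hs
  have ht' : t ∈ Set.Icc (-b) b := Set.uIcc_subset_Icc (a₁ := -s) (b₁ := s) (by constructor <;> linarith) hs' ht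
  simp only [Kext, hs, if_true, h t ht']

theorem ind_mul_aux (b c : ℝ) (hc : c ≤ b) (g u w : ℝ → ℂ)
    (h : ∀ x ∈ Set.Icc (-b) b, w x = u x) (t : ℝ) :
    (Set.Ioc (-c) c).indicator g t * u t = (Set.Ioc (-c) c).indicator (fun t => g t * w t) t := by
  by_cases ht : t ∈ Set.Ioc (-c) c
  · rw [Set.indicator_of_mem ht, Set.indicator_of_mem ht, h t ⟨by linarith [ht.1], by linarith [ht.2]⟩]
  · rw [Set.indicator_of_notMem ht, Set.indicator_of_notMem ht, zero_mul]

theorem Kext_right (b : ℝ) (hb : 0 < b) (H : ℝ → ℝ → ℂ) (hH : Continuous fun p : ℝ × ℝ => H p.1 p.2)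
    (u w : ℝ → ℂ) (hw : Continuous w)
    (h : ∀ x ∈ Set.Icc (-b) b, w x = u x) (s : ℝ) (hs : b < s) (hs2 : s < 2 * b) :
    ∫ t in (-s)..s, Kext b H s t * u t = 2 * Iop H w b - Iop H w (2 * b - s) := by
  have hK : ∀ c : ℝ, Continuous fun t : ℝ => H ((c + t) / 2) ((c - t) / 2) := fun c =>
    hH.comp (by fun_prop : Continuous fun t : ℝ => ((c + t) / 2, (c - t) / 2))
  rw [Iop_eq, Iop_eq, ← ind_integral s b (2 * b - s) hb.le (by linarith) hs.le (by linarith)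
    (fun t => H ((b + t) / 2) ((b - t) / 2) * w t)
    (fun t => H (((2 * b - s) + t) / 2) (((2 * b - s) - t) / 2) * w t)
    ((hK b).mul hw) ((hK (2 * b - s)).mul hw)]
  refine intervalIntegral.integral_congr fun t _ => ?_
  have h1 : ¬ |s| ≤ b := by rw [abs_of_pos (by linarith)]; linarith
  simp only [Kext, h1, hs, if_true, if_false]
  rw [sub_mul, mul_assoc, ind_mul_aux b b le_rfl _ u w h, ind_mul_aux b (2 * b - s) (by linarith) _ u w h]

theorem Kext_left (b : ℝ) (hb : 0 < b) (H : ℝ → ℝ → ℂ) (hH : Continuous fun p : ℝ × ℝ => H p.1 p.2)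
    (u w : ℝ → ℂ) (hw : Continuous w)
    (h : ∀ x ∈ Set.Icc (-b) b, w x = u x) (s : ℝ) (hs : s < -b) (hs2 : -(2 * b) < s) :
    ∫ t in (-s)..s, Kext b H s t * u t = 2 * Iop H w (-b) - Iop H w (-(2 * b + s)) := by
  have hK : ∀ c : ℝ, Continuous fun t : ℝ => H ((c + t) / 2) ((c - t) / 2) := fun c =>
    hH.comp (by fun_prop : Continuous fun t : ℝ => ((c + t) / 2, (c - t) / 2))
  have key := ind_integral (-s) b (2 * b + s) hb.le (by linarith) (by linarith) (by linarith)
    (fun t => H ((-b + t) / 2) ((-b - t) / 2) * w t)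
    (fun t => H ((-(2 * b + s) + t) / 2) ((-(2 * b + s) - t) / 2) * w t)
    ((hK (-b)).mul hw) ((hK (-(2 * b + s))).mul hw)
  have key2 : ∫ t in (-s)..s, Kext b H s t * u t = - ∫ t in (- -s)..(-s), Kext b H s t * u t := by
    rw [intervalIntegral.integral_symm, neg_neg]
  rw [Iop_eq, Iop_eq, key2, intervalIntegral.integral_symm (-b) (- -b),
    intervalIntegral.integral_symm (-(2 * b + s)) (- -(2 * b + s))]
  simp only [neg_neg] at key ⊢
  have e : ∫ t in s..(-s), Kext b H s t * u t = 2 * (∫ t in (-b)..b, H ((-b + t) / 2) ((-b - t) / 2) * w t)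
      - ∫ t in (-(2 * b + s))..(2 * b + s), H ((-(2 * b + s) + t) / 2) ((-(2 * b + s) - t) / 2) * w t := by
    rw [← key]
    refine intervalIntegral.integral_congr fun t _ => ?_
    have h1 : ¬ |s| ≤ b := by rw [abs_of_neg (by linarith)]; linarith
    have h2 : ¬ b < s := by linarith
    simp only [Kext, h1, h2, if_false]
    rw [sub_mul, mul_assoc, ind_mul_aux b b le_rfl _ u w h, ind_mul_aux b (2 * b + s) (by linarith) _ u w h]
  rw [e]; ring

/-- the transmutation operator maps xᵏ to the formal power φₖ. -/
theorem transmutation_maps_powers_to_formal_powers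
    (b : ℝ) (hb : 0 < b) (q : ℝ → ℂ) (hq : ContinuousOn q (Set.Icc (-b) b))
    (f f' : ℝ → ℂ)
    (hf : ∀ x ∈ Set.Icc (-b) b, HasDerivAt f (f' x) x)
    (hf' : ∀ x ∈ Set.Icc (-b) b, HasDerivAt f' (q x * f x) x)
    (hf0 : f 0 = 1) (hf'0 : f' 0 = 0)
    (hfne : ∀ x ∈ Set.Icc (-b) b, f x ≠ 0) :
    ∃ K : ℝ → ℝ → ℂ,
      ContinuousOn (fun p : ℝ × ℝ => K p.1 p.2) {p : ℝ × ℝ | |p.2| ≤ |p.1| ∧ |p.1| ≤ b} ∧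
      (      ∀ u u' u'' : ℝ → ℂ,
        (∀ x ∈ Set.Icc (-b) b, HasDerivAt u (u' x) x) →
        (∀ x ∈ Set.Icc (-b) b, HasDerivAt u' (u'' x) x) →
        ContinuousOn u'' (Set.Icc (-b) b) →
        ∃ D1 D2 : ℝ → ℂ,
          (∀ x ∈ Set.Icc (-b) b,
            HasDerivAt (fun s : ℝ => u s + ∫ t in (-s)..s, K s t * u t) (D1 x) x) ∧
          (∀ x ∈ Set.Icc (-b) b, HasDerivAt D1 (D2 x) x) ∧
          ContinuousOn D2 (Set.Icc (-b) b) ∧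
          ∀ x ∈ Set.Icc (-b) b,
            D2 x - q x * (u x + ∫ t in (-x)..x, K x t * u t)
              = u'' x + ∫ t in (-x)..x, K x t * u'' t) ∧
      ∀ (k : ℕ), ∀ x ∈ Set.Icc (-b) b,
        (x : ℂ) ^ k + (∫ t in (-x)..x, K x t * (t : ℂ) ^ k) = formalPower f k x := by
  obtain ⟨qe, hqc, hqe, hqe2⟩ := extend_aux b hb q hq
  obtain ⟨M, hM⟩ := isCompact_Icc.exists_bound_of_continuousOn hq
  have hqM : ∀ x, ‖qe x‖ ≤ M := fun x => by
    obtain ⟨y, hy, e⟩ := hqe2 x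
    rw [e]; exact hM y hy
  obtain ⟨H, hH, hT⟩ := global_kernel qe hqc M hqM
  refine ⟨Kext b H, ?_, ?_, ?_⟩
  · have hc : Continuous fun p : ℝ × ℝ => H ((p.1 + p.2) / 2) ((p.1 - p.2) / 2) :=
      hH.comp (by fun_prop : Continuous fun p : ℝ × ℝ => ((p.1 + p.2) / 2, (p.1 - p.2) / 2))
    refine hc.continuousOn.congr fun p hp => ?_
    simp only [Kext, hp.2, if_true]
  · intro u u' u'' hu hu' hu''
    obtain ⟨w, w', w'', hw, hw', hw''c, hwu⟩ := extend_C2 b hb u u' u'' hu hu' hu''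
    have hwc : Continuous w := continuous_iff_continuousAt.2 fun x => (hw x).continuousAt
    have hwu0 : ∀ x ∈ Set.Icc (-b) b, w x = u x := fun x hx => (hwu x hx).1
    obtain ⟨E, -, hE1, hE2⟩ := hT w w' w'' hw hw' hw''c
    refine ⟨fun x => w' x + E x, fun x => w'' x + (qe x * w x + qe x * Iop H w x + Iop H w'' x),
      ?_, ?_, ?_, ?_⟩
    · intro x hx
      have hI : HasDerivAt (fun s : ℝ => ∫ t in (-s)..s, Kext b H s t * u t) (E x) x := by
        rcases eq_or_lt_of_le hx.2 with hxb | hxb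
        · subst hxb
          refine glue_deriv _ (Iop H w) (fun s => 2 * Iop H w x - Iop H w (2 * x - s)) _ _ (hE1 x) ?_ ?_ ?_
          · have a : HasDerivAt (fun s : ℝ => 2 * x - s) (-1) x := (hasDerivAt_id x).const_sub _
            have h1 : HasDerivAt (Iop H w) (E x) (2 * x - x) := by
              have : 2 * x - x = x := by ring
              rw [this]; exact hE1 x
            exact ((h1.scomp x a).const_sub _).congr_deriv (by simp)
          · have : 2 * x - x = x := by ring
            simp only [this]; ring
          · filter_upwards [Ioo_mem_nhds (show -x < x by linarith) (show x < 2 * x by linarith)] with s hs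
            rcases le_or_gt s x with h | h
            · left; exact Kext_inside x H u w hwu0 s (abs_le.2 ⟨hs.1.le, h⟩)
            · right; exact Kext_right x hb H hH u w hwc hwu0 s h hs.2
        · rcases eq_or_lt_of_le hx.1 with hxa | hxa
          · have hxe : x = -b := hxa.symm
            subst hxe
            refine glue_deriv _ (Iop H w) (fun s => 2 * Iop H w (-b) - Iop H w (-(2 * b + s))) (E (-b)) (-b) (hE1 _) ?_ ?_ ?_
            · have a : HasDerivAt (fun s : ℝ => -(2 * b + s)) (-1) (-b) := ((hasDerivAt_id (-b)).const_add _).neg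
              have h1 : HasDerivAt (Iop H w) (E (-b)) (-(2 * b + -b)) := by
                have : -(2 * b + -b) = -b := by ring
                rw [this]; exact hE1 _
              have h2 := (h1.scomp (-b) a).const_sub (2 * Iop H w (-b))
              have e : -((-1 : ℝ) • E (-b)) = E (-b) := by simp
              rw [e] at h2
              exact h2
            · have : -(2 * b + -b) = -b := by ring
              simp only [this]; ring
            · filter_upwards [Ioo_mem_nhds (show -(2 * b) < -b by linarith) (show -b < b by linarith)] with s hs
              rcases le_or_gt (-b) s with h | h
              · left; exact Kext_inside b H u w hwu0 s (abs_le.2 ⟨h, hs.2.le⟩)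
              · right; exact Kext_left b hb H hH u w hwc hwu0 s h hs.1
          · refine (hE1 x).congr_of_eventuallyEq ?_
            filter_upwards [Ioo_mem_nhds hxa hxb] with s hs
            exact Kext_inside b H u w hwu0 s (abs_le.2 ⟨hs.1.le, hs.2.le⟩)
      change HasDerivAt _ (w' x + E x) x
      rw [(hwu x hx).2.1]
      exact (hu x hx).add hI
    · intro x _
      exact (hw' x).add (hE2 x)
    · have h1 := Iop_continuous H hH w hwc
      have h2 := Iop_continuous H hH w'' hw''c
      exact Continuous.continuousOn (by fun_prop)
    · intro x hx
      have hxa := abs_le.2 hx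
      rw [Kext_inside b H u w hwu0 x hxa, Kext_inside b H u'' w'' (fun x hx => (hwu x hx).2.2) x hxa]
      simp only [hqe x hx, (hwu x hx).1, (hwu x hx).2.2]
      ring
  · intro k x hx
    rw [Kext_inside b H (fun t => (t : ℂ) ^ k) (fun t => (t : ℂ) ^ k) (fun _ _ => rfl) x (abs_le.2 hx)]
    refine powers_aux b hb q f f' hf hf' hf0 hf'0 hfne H ?_ k x hx
    intro u u' u'' hu hu' hu''
    obtain ⟨E, h0, h1, h2⟩ := hT u u' u'' hu hu' hu''
    refine ⟨E, h0, h1, fun x hx => ?_⟩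
    rw [← hqe x hx]
    exact h2 x

end
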